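/- Let p ∈ (0,1/2], r ∈ ℕ and δ > 0. Suppose f : {0,1}^n → ℝ has degree at most r (i.e. f̂(S) = 0 whenever |S| > r) and I_S(f) ≤ δ for all S ⊆ [n] with |S| ≤ r. Then ‖f‖₄ ≤ 5^{3r/4}·δ^{1/4}·‖f‖₂^{1/2}. -/

import Mathlib

open Finset

namespace GlobalHC

variable {n : ℕ}

/-- Expectation with respect to the `p`-biased measure on `{0,1}^n`. -/
noncomputable def Ep (p : ℝ) (f : (Fin n → Bool) → ℝ) : ℝ :=
  ∑ x : Fin n → Bool, (∏ i, if x i then p else 1 - p) * f x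

/-- The `r`-norm with respect to the `p`-biased measure. -/
noncomputable def pnorm (p r : ℝ) (f : (Fin n → Bool) → ℝ) : ℝ :=
  (Ep p fun x => |f x| ^ r) ^ (1 / r)

/-- The `p`-biased character `χ_S`. -/
noncomputable def chi (p : ℝ) (S : Finset (Fin n)) (x : Fin n → Bool) : ℝ :=
  ∏ i ∈ S, ((if x i then (1 : ℝ) else 0) - p) / Real.sqrt (p * (1 - p))

/-- The `p`-biased Fourier coefficient `f̂(S)`. -/
noncomputable def coeff (p : ℝ) (f : (Fin n → Bool) → ℝ) (S : Finset (Fin n)) : ℝ :=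
  Ep p fun x => f x * chi p S x

/-- The derivative `D_S f = Σ_{T ⊇ S} f̂(T) χ_{T∖S}`. -/
noncomputable def derivS (p : ℝ) (S : Finset (Fin n)) (f : (Fin n → Bool) → ℝ) :
    (Fin n → Bool) → ℝ :=
  fun x => ∑ T ∈ Finset.univ.filter (fun T => S ⊆ T), coeff p f T * chi p (T \ S) x

/-- The generalised influence `I_S(f) = σ^{-2|S|} Σ_{T ⊇ S} f̂(T)²`. -/
noncomputable def genInf (p : ℝ) (S : Finset (Fin n)) (f : (Fin n → Bool) → ℝ) : ℝ :=
  (∑ T ∈ Finset.univ.filter (fun T => S ⊆ T), coeff p f T ^ 2) / (p * (1 - p)) ^ S.card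

/-- The noise operator `T_ρ f = Σ_S ρ^{|S|} f̂(S) χ_S`. -/
noncomputable def noise (p ρ : ℝ) (f : (Fin n → Bool) → ℝ) : (Fin n → Bool) → ℝ :=
  fun x => ∑ S : Finset (Fin n), ρ ^ S.card * coeff p f S * chi p S x

/-- The degree-`r` truncation `f^{≤ r}`. -/
noncomputable def trunc (p : ℝ) (r : ℕ) (f : (Fin n → Bool) → ℝ) : (Fin n → Bool) → ℝ :=
  fun x => ∑ S ∈ Finset.univ.filter (fun S : Finset (Fin n) => S.card ≤ r),
    coeff p f S * chi p S x

/-- The restriction `f_{J→1}` setting all coordinates in `J` to `1`. -/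
def restrict1 (J : Finset (Fin n)) (f : (Fin n → Bool) → ℝ) : (Fin n → Bool) → ℝ :=
  fun x => f (fun i => if i ∈ J then true else x i)

/-- `f` is `(r,δ)`-global (for the `p`-biased measure). -/
def IsGlobal (p r δ : ℝ) (f : (Fin n → Bool) → ℝ) : Prop :=
  ∀ J : Finset (Fin n), (J.card : ℝ) ≤ r → Ep p (restrict1 J f) ≤ Ep p f + δ

/-- The total influence `I[f] = Σ_i Pr_{μ_p}[f(x ⊕ e_i) ≠ f(x)]`. -/
noncomputable def totalInf (p : ℝ) (f : (Fin n → Bool) → ℝ) : ℝ :=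
  ∑ i : Fin n, Ep p fun x => if f (Function.update x i (!x i)) = f x then 0 else 1

/-- Noise stability `Stab_ρ(f) = Σ_S ρ^{|S|} f̂(S)²` (w.r.t. `μ_p`). -/
noncomputable def stab (p ρ : ℝ) (f : (Fin n → Bool) → ℝ) : ℝ :=
  ∑ S : Finset (Fin n), ρ ^ S.card * coeff p f S ^ 2

/-- `f` is monotone. -/
def Mono (f : (Fin n → Bool) → ℝ) : Prop :=
  ∀ x y : Fin n → Bool, (∀ i, x i ≤ y i) → f x ≤ f y


/-! ### Auxiliary material for the proof -/

theorem alg_step (p k a b c d : ℝ) (hp : 0 < p) (hp' : p ≤ 1/2) (hk : k^2 * (p*(1-p)) = 1) :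
    p * ((a + (1-p)*k*b)^2 * (c + (1-p)*k*d)^2) + (1-p) * ((a + (0-p)*k*b)^2*(c+(0-p)*k*d)^2)
      ≤ a^2*c^2 + 4 * (a^2*d^2) + 4*(b^2*c^2) + 16 * k^2 * (b^2*d^2) := by
  have h1 := sq_nonneg (a*d - b*c)
  have h2 := sq_nonneg (a*d - (1-2*p)*k*(b*d))
  have h3 := sq_nonneg (b*c - (1-2*p)*k*(b*d))
  have h4 : 0 ≤ (1-(1-2*p)^2) * (k*b*d)^2 := by
    apply mul_nonneg _ (sq_nonneg _); nlinarith
  have h5 : 0 ≤ p*(1-p) * (k*b*d)^2 := by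
    apply mul_nonneg _ (sq_nonneg _); nlinarith
  have h6 : 0 ≤ (k*b*d)^2 := sq_nonneg _
  have key : p * ((a + (1-p)*k*b)^2 * (c + (1-p)*k*d)^2)
      + (1-p) * ((a + (0-p)*k*b)^2*(c+(0-p)*k*d)^2)
      = a^2*c^2 + a^2*d^2 + b^2*c^2 + 4*(a*b*c*d)
        + (1-2*p)*k*(2*a*b*d^2+2*b^2*c*d) + (1-3*(p*(1-p)))*k^2*(b^2*d^2) := by
    linear_combination (a^2*d^2 + b^2*c^2 + 4*(a*b*c*d)
        + (1-2*p)*k*(2*a*b*d^2+2*b^2*c*d) + (1-3*(p*(1-p)))*k^2*(b^2*d^2)) * hk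
  rw [key]
  nlinarith

/-- one-coordinate weight -/
noncomputable def q (p : ℝ) (b : Bool) : ℝ := if b then p else 1 - p

/-- one-coordinate character -/
noncomputable def u (p : ℝ) (b : Bool) : ℝ :=
  ((if b then (1 : ℝ) else 0) - p) / Real.sqrt (p * (1 - p))

theorem Ep_eq (p : ℝ) (f : (Fin n → Bool) → ℝ) : Ep p f = ∑ x, (∏ i, q p (x i)) * f x := rfl

theorem chi_eq (p : ℝ) (S : Finset (Fin n)) (x) : chi p S x = ∏ i ∈ S, u p (x i) := rfl

theorem Ep_mono {p : ℝ} (hp : 0 < p) (hp' : p ≤ 1/2) {f g : (Fin n → Bool) → ℝ}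
    (h : ∀ x, f x ≤ g x) : Ep p f ≤ Ep p g := by
  refine Finset.sum_le_sum fun x _ => mul_le_mul_of_nonneg_left (h x) ?_
  refine Finset.prod_nonneg fun i _ => ?_
  split_ifs <;> linarith

theorem Ep_add (p : ℝ) (f g : (Fin n → Bool) → ℝ) :
    Ep p (fun x => f x + g x) = Ep p f + Ep p g := by
  simp only [Ep, mul_add, Finset.sum_add_distrib]

theorem Ep_mul (p c : ℝ) (f : (Fin n → Bool) → ℝ) :
    Ep p (fun x => c * f x) = c * Ep p f := by
  simp only [Ep, Finset.mul_sum]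
  exact Finset.sum_congr rfl fun x _ => by ring

theorem Ep_avg (p : ℝ) (i : Fin n) (f : (Fin n → Bool) → ℝ) :
    Ep p f = Ep p (fun x => p * f (Function.update x i true)
      + (1 - p) * f (Function.update x i false)) := by
  have hinv : Function.Involutive (fun x : Fin n → Bool => Function.update x i (!x i)) := by
    intro x; simp
  have hW : ∀ x : Fin n → Bool, (∏ j, q p (x j)) = q p (x i) * ∏ j ∈ univ.erase i, q p (x j) :=
    fun x => (Finset.mul_prod_erase _ _ (Finset.mem_univ i)).symm
  have hW' : ∀ (x : Fin n → Bool) (b : Bool), (∏ j ∈ univ.erase i, q p (Function.update x i b j))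
      = ∏ j ∈ univ.erase i, q p (x j) := fun x b => by
    refine Finset.prod_congr rfl fun j hj => ?_
    rw [Function.update_of_ne (Finset.ne_of_mem_erase hj)]
  have two : ∀ g : (Fin n → Bool) → ℝ, 2 * Ep p g
      = ∑ x, (∏ j ∈ univ.erase i, q p (x j)) *
        (p * g (Function.update x i true) + (1 - p) * g (Function.update x i false)) := by
    intro g
    have e : Ep p g = ∑ x : Fin n → Bool, (∏ j, q p (Function.update x i (!x i) j))
        * g (Function.update x i (!x i)) := by
      rw [Ep_eq]
      exact (Equiv.sum_comp hinv.toPerm (fun x => (∏ j, q p (x j)) * g x)).symm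
    rw [two_mul]
    nth_rewrite 1 [Ep_eq]
    rw [e, ← Finset.sum_add_distrib]
    refine Finset.sum_congr rfl fun x _ => ?_
    rw [hW, hW, hW']
    have hx : x = Function.update x i (x i) := by simp
    rw [Function.update_self]
    nth_rewrite 3 [hx]
    cases x i <;> simp [q] <;> ring
  have h1 := two f
  have h2 := two (fun x => p * f (Function.update x i true)
      + (1 - p) * f (Function.update x i false))
  simp only [Function.update_idem] at h2
  have : 2 * Ep p f = 2 * Ep p (fun x => p * f (Function.update x i true)
      + (1 - p) * f (Function.update x i false)) := by
    rw [h1, h2]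
    exact Finset.sum_congr rfl fun x _ => by ring
  linarith

/-- polynomial with coefficients `α` in variables from `A` -/
noncomputable def F (p : ℝ) (A : Finset (Fin n)) (α : Finset (Fin n) → ℝ)
    (x : Fin n → Bool) : ℝ := ∑ S ∈ A.powerset, α S * chi p S x

/-- weighted influence -/
noncomputable def U (A : Finset (Fin n)) (α : Finset (Fin n) → ℝ) (S : Finset (Fin n)) : ℝ :=
  ∑ T ∈ A.powerset, if S ⊆ T then (4:ℝ) ^ T.card * α T ^ 2 else 0

theorem U_nonneg (A : Finset (Fin n)) (α S) : 0 ≤ U A α S :=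
  Finset.sum_nonneg fun T _ => by split_ifs <;> positivity

theorem F_insert (p : ℝ) {A : Finset (Fin n)} {i : Fin n} (hi : i ∉ A) (α x) :
    F p (insert i A) α x = F p A α x + u p (x i) * F p A (fun S => α (insert i S)) x := by
  unfold F
  rw [Finset.sum_powerset_insert hi, Finset.mul_sum]
  congr 1
  refine Finset.sum_congr rfl fun S hS => ?_
  have : i ∉ S := fun h => hi (Finset.mem_powerset.1 hS h)
  rw [chi_eq, chi_eq, Finset.prod_insert this]
  ring

theorem F_update (p : ℝ) {A : Finset (Fin n)} {i : Fin n} (hi : i ∉ A) (α x b) :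
    F p A α (Function.update x i b) = F p A α x := by
  unfold F
  refine Finset.sum_congr rfl fun S hS => ?_
  rw [chi_eq, chi_eq]
  congr 1
  refine Finset.prod_congr rfl fun j hj => ?_
  rw [Function.update_of_ne]
  rintro rfl
  exact hi (Finset.mem_powerset.1 hS hj)

theorem U_insert {A : Finset (Fin n)} {i : Fin n} (hi : i ∉ A) (α) {S : Finset (Fin n)}
    (hS : S ⊆ A) :
    U (insert i A) α S = U A α S + 4 * U A (fun S => α (insert i S)) S := by
  unfold U
  rw [Finset.sum_powerset_insert hi, Finset.mul_sum]
  congr 1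
  refine Finset.sum_congr rfl fun T hT => ?_
  have h1 : i ∉ T := fun h => hi (Finset.mem_powerset.1 hT h)
  have h2 : i ∉ S := fun h => hi (hS h)
  simp only [Finset.subset_insert_iff_of_notMem h2, Finset.card_insert_of_notMem h1]
  split_ifs <;> ring

theorem U_insert' {A : Finset (Fin n)} {i : Fin n} (hi : i ∉ A) (α) {S : Finset (Fin n)}
    (hS : S ⊆ A) :
    U (insert i A) α (insert i S) = 4 * U A (fun S => α (insert i S)) S := by
  unfold U
  have h2 : i ∉ S := fun h => hi (hS h)
  rw [Finset.sum_powerset_insert hi, Finset.mul_sum, Finset.sum_eq_zero, zero_add]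
  · refine Finset.sum_congr rfl fun T hT => ?_
    have h1 : i ∉ T := fun h => hi (Finset.mem_powerset.1 hT h)
    simp only [Finset.insert_subset_insert_iff h2, Finset.card_insert_of_notMem h1]
    split_ifs <;> ring
  · intro T hT
    have h1 : i ∉ T := fun h => hi (Finset.mem_powerset.1 hT h)
    rw [if_neg]
    exact fun h => h1 (h (Finset.mem_insert_self _ _))

theorem main_ineq {p : ℝ} (hp : 0 < p) (hp' : p ≤ 1/2) (A : Finset (Fin n)) :
    ∀ α β : Finset (Fin n) → ℝ,
    Ep p (fun x => F p A α x ^ 2 * F p A β x ^ 2) ≤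
      ∑ S ∈ A.powerset, ((p * (1 - p))⁻¹) ^ S.card * (U A α S * U A β S) := by
  induction A using Finset.induction_on with
  | empty =>
    intro α β
    have h1 : ∀ m : ℕ, ∑ x : Fin m → Bool, (∏ i, q p (x i)) = 1 := by
      intro m
      have := (Finset.prod_univ_sum (fun _ : Fin m => (univ : Finset Bool))
        (fun _ b => q p b)).symm
      rw [Fintype.piFinset_univ] at this
      rw [this]
      simp [q]
    simp [F, U, chi, Ep_eq, ← Finset.sum_mul, h1]
  | insert i A hi ih =>
    intro α β
    set α' : Finset (Fin n) → ℝ := fun S => α (insert i S) with hα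
    set β' : Finset (Fin n) → ℝ := fun S => β (insert i S) with hβ
    have hs : 0 < p * (1 - p) := mul_pos hp (by linarith)
    have hk : ((Real.sqrt (p * (1 - p)))⁻¹)^2 = (p * (1-p))⁻¹ := by
      rw [inv_pow, Real.sq_sqrt hs.le]
    rw [Ep_avg p i]
    have step : ∀ x : Fin n → Bool,
        p * (F p (insert i A) α (Function.update x i true) ^ 2
          * F p (insert i A) β (Function.update x i true) ^ 2)
        + (1 - p) * (F p (insert i A) α (Function.update x i false) ^ 2
          * F p (insert i A) β (Function.update x i false) ^ 2)
        ≤ F p A α x ^ 2 * F p A β x ^ 2 + 4 * (F p A α x ^ 2 * F p A β' x ^ 2)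
          + 4 * (F p A α' x ^ 2 * F p A β x ^ 2)
          + 16 * (p * (1-p))⁻¹ * (F p A α' x ^ 2 * F p A β' x ^ 2) := by
      intro x
      simp only [F_insert p hi, F_update p hi, Function.update_self]
      have := alg_step p (Real.sqrt (p * (1 - p)))⁻¹ (F p A α x) (F p A α' x) (F p A β x)
        (F p A β' x) hp hp' (by rw [hk]; exact inv_mul_cancel₀ hs.ne')
      rw [hk] at this
      simpa [u, div_eq_mul_inv] using this
    refine (Ep_mono hp hp' step).trans ?_
    rw [Ep_add, Ep_add, Ep_add, Ep_mul, Ep_mul, Ep_mul]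
    have i1 := ih α β
    have i2 := ih α β'
    have i3 := ih α' β
    have i4 := ih α' β'
    have hc : 0 ≤ 16 * (p * (1-p))⁻¹ := by positivity
    have i5 := mul_le_mul_of_nonneg_left i4 hc
    have hR : ∑ S ∈ A.powerset, ((p * (1 - p))⁻¹) ^ S.card * (U A α S * U A β S)
        + 4 * ∑ S ∈ A.powerset, ((p * (1 - p))⁻¹) ^ S.card * (U A α S * U A β' S)
        + 4 * ∑ S ∈ A.powerset, ((p * (1 - p))⁻¹) ^ S.card * (U A α' S * U A β S)
        + 16 * (p * (1-p))⁻¹ *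
          ∑ S ∈ A.powerset, ((p * (1 - p))⁻¹) ^ S.card * (U A α' S * U A β' S)
        ≤ ∑ S ∈ (insert i A).powerset,
          ((p * (1 - p))⁻¹) ^ S.card * (U (insert i A) α S * U (insert i A) β S) := by
      rw [Finset.sum_powerset_insert hi]
      simp only [Finset.mul_sum]
      simp only [← Finset.sum_add_distrib]
      refine Finset.sum_le_sum fun S hS => ?_
      have hS' := Finset.mem_powerset.1 hS
      have h1 : i ∉ S := fun h => hi (hS' h)
      rw [U_insert hi α hS', U_insert hi β hS', U_insert' hi α hS', U_insert' hi β hS',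
        Finset.card_insert_of_notMem h1, pow_succ]
      have : 0 ≤ ((p * (1 - p))⁻¹) ^ S.card * (U A α' S * U A β' S) :=
        mul_nonneg (by positivity) (mul_nonneg (U_nonneg _ _ _) (U_nonneg _ _ _))
      rw [← hα, ← hβ]
      nlinarith
    linarith

theorem inversion {p : ℝ} (hp : 0 < p) (hp' : p ≤ 1/2) (f : (Fin n → Bool) → ℝ) (x) :
    ∑ S : Finset (Fin n), coeff p f S * chi p S x = f x := by
  have hs : 0 < p * (1 - p) := mul_pos hp (by linarith)
  have hr : Real.sqrt (p * (1-p)) * Real.sqrt (p*(1-p)) = p * (1-p) := Real.mul_self_sqrt hs.le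
  have hr0 : Real.sqrt (p * (1-p)) ≠ 0 := (Real.sqrt_pos.2 hs).ne'
  have h1p : 1 - p ≠ 0 := by linarith
  have hq : ∀ b, q p b * (1 + u p b * u p b) = 1 := by
    intro b
    cases b <;> simp only [q, u, div_mul_div_comm, hr] <;> simp <;> field_simp <;> ring
  have hq' : ∀ b c, b ≠ c → 1 + u p b * u p c = 0 := by
    intro b c h
    cases b <;> cases c <;> simp only [u, div_mul_div_comm, hr] <;> simp at h ⊢ <;>
      field_simp <;> ring
  have hker : ∀ y : Fin n → Bool, ∑ S : Finset (Fin n), chi p S y * chi p S x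
      = ∏ i, (1 + u p (y i) * u p (x i)) := by
    intro y
    rw [Finset.prod_one_add, Finset.powerset_univ]
    simp only [chi_eq, Finset.prod_mul_distrib]
  simp only [coeff, Ep_eq, Finset.sum_mul]
  rw [Finset.sum_comm]
  have : ∀ y : Fin n → Bool, ∑ S : Finset (Fin n), (∏ i, q p (y i)) * (f y * chi p S y) * chi p S x
      = if y = x then f x else 0 := by
    intro y
    have e : ∑ S : Finset (Fin n), (∏ i, q p (y i)) * (f y * chi p S y) * chi p S x
      = f y * ((∏ i, q p (y i)) * ∑ S : Finset (Fin n), chi p S y * chi p S x) := by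
      simp only [Finset.mul_sum]
      exact Finset.sum_congr rfl fun S _ => by ring
    rw [e, hker]
    split_ifs with h
    · subst h
      rw [← Finset.prod_mul_distrib]
      simp [hq]
    · obtain ⟨i, hi⟩ := Function.ne_iff.1 h
      have hz : ∏ i, (1 + u p (y i) * u p (x i)) = 0 :=
        Finset.prod_eq_zero (Finset.mem_univ i) (hq' _ _ hi)
      rw [hz]
      simp
  simp [this]

theorem parseval {p : ℝ} (hp : 0 < p) (hp' : p ≤ 1/2) (f : (Fin n → Bool) → ℝ) :
    ∑ S : Finset (Fin n), coeff p f S ^ 2 = Ep p (fun x => f x ^ 2) := by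
  have : ∀ x, f x ^ 2 = ∑ S : Finset (Fin n), coeff p f S * (f x * chi p S x) := by
    intro x
    rw [sq]
    nth_rewrite 2 [← inversion hp hp' f x]
    rw [Finset.mul_sum]
    exact Finset.sum_congr rfl fun S _ => by ring
  simp only [this]
  rw [Ep_eq]
  simp only [Finset.mul_sum]
  rw [Finset.sum_comm]
  refine Finset.sum_congr rfl fun S _ => ?_
  rw [sq]
  nth_rewrite 2 [coeff]
  rw [Ep_eq, Finset.mul_sum]
  exact Finset.sum_congr rfl fun x _ => by ring

theorem fourth_moment (p δ : ℝ) (r : ℕ) (hp : 0 < p) (hp' : p ≤ 1/2) (hδ : 0 < δ)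
    (f : (Fin n → Bool) → ℝ)
    (hdeg : ∀ S : Finset (Fin n), r < S.card → coeff p f S = 0)
    (hinf : ∀ S : Finset (Fin n), S.card ≤ r → genInf p S f ≤ δ) :
    Ep p (fun x => f x ^ 4) ≤ 125 ^ r * δ * Ep p (fun x => f x ^ 2) := by
  have hs : 0 < p * (1 - p) := mul_pos hp (by linarith)
  have hm := main_ineq hp hp' (univ : Finset (Fin n)) (coeff p f) (coeff p f)
  have hF : ∀ x, F p univ (coeff p f) x = f x := fun x => by
    rw [F, Finset.powerset_univ]; exact inversion hp hp' f x
  simp only [hF, Finset.powerset_univ] at hm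
  set V : Finset (Fin n) → ℝ := fun S => ∑ T : Finset (Fin n), if S ⊆ T then coeff p f T ^ 2 else 0
    with hV
  have hV0 : ∀ S, 0 ≤ V S := fun S => Finset.sum_nonneg fun T _ => by split_ifs <;> positivity
  have hUV : ∀ S, U univ (coeff p f) S ≤ 4 ^ r * V S := by
    intro S
    rw [U, hV, Finset.powerset_univ, Finset.mul_sum]
    refine Finset.sum_le_sum fun T _ => ?_
    split_ifs
    · by_cases hT : r < T.card
      · simp [hdeg T hT]
      · exact mul_le_mul_of_nonneg_right (pow_le_pow_right₀ (by norm_num) (by omega))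
          (sq_nonneg _)
    · simp
  have hVδ : ∀ S, ((p * (1 - p))⁻¹) ^ S.card * V S ≤ δ := by
    intro S
    by_cases hS : r < S.card
    · have : V S = 0 := Finset.sum_eq_zero fun T _ => by
        split_ifs with h
        · simp [hdeg T (hS.trans_le (Finset.card_le_card h))]
        · rfl
      rw [this]; simpa using hδ.le
    · have := hinf S (by omega)
      rw [genInf, Finset.sum_filter, div_eq_mul_inv, mul_comm, ← inv_pow] at this
      exact this
  have hterm : ∀ S : Finset (Fin n), ((p * (1 - p))⁻¹) ^ S.card *
      (U univ (coeff p f) S * U univ (coeff p f) S) ≤ 16 ^ r * δ * V S := by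
    intro S
    have h1 : U univ (coeff p f) S * U univ (coeff p f) S ≤ (4 ^ r * V S) * (4 ^ r * V S) :=
      mul_self_le_mul_self (U_nonneg _ _ _) (hUV S)
    have h2 : 0 ≤ ((p * (1 - p))⁻¹) ^ S.card := by positivity
    have h16 : (16:ℝ) ^ r = 4 ^ r * 4 ^ r := by rw [← mul_pow]; norm_num
    calc _ ≤ ((p * (1 - p))⁻¹) ^ S.card * ((4 ^ r * V S) * (4 ^ r * V S)) :=
          mul_le_mul_of_nonneg_left h1 h2
      _ = 16 ^ r * V S * (((p * (1 - p))⁻¹) ^ S.card * V S) := by rw [h16]; ring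
      _ ≤ 16 ^ r * V S * δ :=
          mul_le_mul_of_nonneg_left (hVδ S) (mul_nonneg (by positivity) (hV0 S))
      _ = _ := by ring
  have hsum : ∑ S, V S ≤ 2 ^ r * Ep p (fun x => f x ^ 2) := by
    rw [← parseval hp hp', hV, Finset.sum_comm, Finset.mul_sum]
    refine Finset.sum_le_sum fun T _ => ?_
    have : (∑ S : Finset (Fin n), if S ⊆ T then coeff p f T ^ 2 else 0)
        = 2 ^ T.card * coeff p f T ^ 2 := by
      rw [← Finset.sum_filter, Finset.sum_const, nsmul_eq_mul]
      have : (univ.filter fun S : Finset (Fin n) => S ⊆ T) = T.powerset := by ext; simp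
      rw [this, Finset.card_powerset]; push_cast; rfl
    rw [this]
    by_cases hT : r < T.card
    · simp [hdeg T hT]
    · exact mul_le_mul_of_nonneg_right (pow_le_pow_right₀ (by norm_num) (by omega))
          (sq_nonneg _)
  have hE : 0 ≤ Ep p (fun x => f x ^ 2) := by
    rw [← parseval hp hp']; positivity
  have h32 : (16:ℝ) ^ r * 2 ^ r ≤ 125 ^ r := by
    rw [← mul_pow]; exact pow_le_pow_left₀ (by norm_num) (by norm_num) r
  calc Ep p (fun x => f x ^ 4) = Ep p (fun x => f x ^ 2 * f x ^ 2) := by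
        congr 1; funext x; ring
    _ ≤ _ := hm
    _ ≤ ∑ S, 16 ^ r * δ * V S := Finset.sum_le_sum fun S _ => hterm S
    _ = 16 ^ r * δ * ∑ S, V S := by rw [Finset.mul_sum]
    _ ≤ 16 ^ r * δ * (2 ^ r * Ep p (fun x => f x ^ 2)) :=
        mul_le_mul_of_nonneg_left hsum (by positivity)
    _ = (16 ^ r * 2 ^ r) * (δ * Ep p (fun x => f x ^ 2)) := by ring
    _ ≤ 125 ^ r * (δ * Ep p (fun x => f x ^ 2)) :=
        mul_le_mul_of_nonneg_right h32 (mul_nonneg hδ.le hE)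
    _ = _ := by ring

/-- hypercontractivity for low-degree functions with small generalised
influences. -/
theorem statement3 {n : ℕ} (p δ : ℝ) (r : ℕ) (hp : 0 < p) (hp' : p ≤ 1/2) (hδ : 0 < δ)
    (f : (Fin n → Bool) → ℝ)
    (hdeg : ∀ S : Finset (Fin n), r < S.card → coeff p f S = 0)
    (hinf : ∀ S : Finset (Fin n), S.card ≤ r → genInf p S f ≤ δ) :
    pnorm p 4 f ≤
      (5 : ℝ) ^ (3 * (r : ℝ) / 4) * δ ^ ((1 : ℝ)/4) * pnorm p 2 f ^ ((1 : ℝ)/2) := by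
  have hm := fourth_moment p δ r hp hp' hδ f hdeg hinf
  have hE : 0 ≤ Ep p (fun x => f x ^ 2) := by
    rw [← parseval hp hp']; positivity
  have hE4 : 0 ≤ Ep p (fun x => f x ^ 4) := by
    have := Ep_mono (f := fun _ => 0) (g := fun x => f x ^ 4) hp hp' (fun x => by positivity)
    simpa [Ep] using this
  have e4 : (fun x => |f x| ^ (4:ℝ)) = fun x => f x ^ 4 := by
    funext x
    rw [show (4:ℝ) = ((4:ℕ):ℝ) by norm_num, Real.rpow_natCast, Even.pow_abs (by decide)]
  have e2 : (fun x => |f x| ^ (2:ℝ)) = fun x => f x ^ 2 := by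
    funext x
    rw [show (2:ℝ) = ((2:ℕ):ℝ) by norm_num, Real.rpow_natCast, Even.pow_abs (by decide)]
  rw [pnorm, pnorm, e4, e2, ← Real.rpow_mul hE]
  refine (Real.rpow_le_rpow hE4 hm (by norm_num)).trans (le_of_eq ?_)
  rw [Real.mul_rpow (by positivity) hE, Real.mul_rpow (by positivity) hδ.le]
  have h125 : ((125:ℝ) ^ r) ^ ((1:ℝ)/4) = 5 ^ (3 * (r:ℝ) / 4) := by
    rw [show (125:ℝ) = 5 ^ (3:ℕ) by norm_num, ← pow_mul, ← Real.rpow_natCast,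
      ← Real.rpow_mul (by norm_num)]
    congr 1
    push_cast
    ring
  rw [h125]
  norm_num

end GlobalHC
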